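/- Suppose $\{v_n\}$ is a $\gamma$-uniformly distributed sequence in the torus $\mathbb{T}^d$, $d \geq 2$, with $\gamma \in (0, 1/2]$. For $\frac{1}{100} \leq a \leq b < \frac{1}{2}$, let $A_{[a,b]} = \{x \in \mathbb{T}^d : a \leq \|x\| \leq b\}$ where $\|x\|$ is the distance from $x$ to the lattice $\mathbb{Z}^d$. Then $\#\{(n,m) \in [1,N]^2 : a \leq \|v_n - v_m\| \leq b\} = N^2 |A_{[a,b]}| + R(a,b,N)$, where for every $\epsilon > 0$ there is $C_\epsilon > 0$ (independent of $a, b$) with $|R(a,b,N)| \leq C_\epsilon N^{2 - \frac{4\gamma}{d+1} + \epsilon}$. -/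

import Mathlib

open Finset MeasureTheory

/-- Euclidean norm of an integer vector `k ∈ ℤ^d`. -/
noncomputable def intNorm {d : ℕ} (k : Fin d → ℤ) : ℝ :=
  Real.sqrt (∑ i, ((k i : ℝ)) ^ 2)

/-- The toral (Euclidean) norm on `𝕋^d = (ℝ/ℤ)^d`: the distance to the lattice `ℤ^d`. -/
noncomputable def torusNorm {d : ℕ} (x : Fin d → AddCircle (1:ℝ)) : ℝ :=
  Real.sqrt (∑ i, ‖x i‖ ^ 2)

/-- A sequence in `𝕋^d` is `γ`-uniformly distributed if for every `ε > 0` there is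
`C_ε > 0` with `|N⁻¹ ∑_{n=1}^N e^{2πi k·v_n}| ≤ C_ε |k|^ε N^{-γ}` for every nonzero
`k ∈ ℤ^d` and every `N ≥ 1`. -/
def IsGammaUDTorus {d : ℕ} (γ : ℝ) (v : ℕ → Fin d → AddCircle (1:ℝ)) : Prop :=
  ∀ ε : ℝ, 0 < ε → ∃ C : ℝ, 0 < C ∧ ∀ k : Fin d → ℤ, k ≠ 0 → ∀ N : ℕ, 1 ≤ N →
    ‖(N : ℂ)⁻¹ * ∑ n ∈ Finset.range N, ∏ i, fourier (k i) (v n i)‖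
      ≤ C * intNorm k ^ ε * (N : ℝ) ^ (-γ)

section

open UnitAddTorus ComplexConjugate

/-- The volume on the torus is the product of the normalised Haar measures. -/
lemma volume_torus_eq (d : ℕ) : (volume : Measure (Fin d → AddCircle (1:ℝ))) =
    Measure.pi fun _ => (AddCircle.haarAddCircle : Measure (AddCircle (1:ℝ))) := by
  have h : (volume : Measure (AddCircle (1:ℝ))) = AddCircle.haarAddCircle := by
    rw [AddCircle.volume_eq_smul_haarAddCircle]; simp
  rw [volume_pi, h]

instance isProbabilityMeasure_volume_torus (d : ℕ) :
    IsProbabilityMeasure (volume : Measure (Fin d → AddCircle (1:ℝ))) := by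
  rw [volume_torus_eq]
  infer_instance

/-- The Fourier coefficient of a function on the torus. -/
noncomputable def torusCoeff {d : ℕ} (f : (Fin d → AddCircle (1:ℝ)) → ℂ) (k : Fin d → ℤ) : ℂ :=
  ∫ t, mFourier (-k) t * f t

lemma torusCoeff_eq {d : ℕ} (f : (Fin d → AddCircle (1:ℝ)) → ℂ) (k : Fin d → ℤ) :
    torusCoeff f k = mFourierCoeff f k := by
  rw [torusCoeff, volume_torus_eq]
  rfl

lemma hasSum_conj_torusCoeff_mul {d : ℕ} {f g : (Fin d → AddCircle (1:ℝ)) → ℂ}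
    (hf : MemLp f 2) (hg : MemLp g 2) :
    HasSum (fun k => conj (torusCoeff f k) * torusCoeff g k) (∫ t, conj (f t) * g t) := by
  rw [volume_torus_eq] at hf hg
  have h := hasSum_prod_mFourierCoeff (hf.toLp f) (hg.toLp g)
  convert! h using 1
  · ext k
    rw [torusCoeff_eq, torusCoeff_eq]
    congr 1
    · congr 1
      apply integral_congr_ae
      filter_upwards [hf.coeFn_toLp] with t ht
      rw [ht]
    · apply integral_congr_ae
      filter_upwards [hg.coeFn_toLp] with t ht
      rw [ht]
  · rw [volume_torus_eq]
    apply integral_congr_ae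
    filter_upwards [hf.coeFn_toLp, hg.coeFn_toLp] with t ht hs
    rw [ht, hs]

lemma hasSum_sq_torusCoeff {d : ℕ} {f : (Fin d → AddCircle (1:ℝ)) → ℂ} (hf : MemLp f 2) :
    HasSum (fun k => ‖torusCoeff f k‖ ^ 2) (∫ t, ‖f t‖ ^ 2) := by
  have h := Complex.hasSum_re (hasSum_conj_torusCoeff_mul hf hf)
  have key : ∀ z : ℂ, conj z * z = ((‖z‖ ^ 2 : ℝ) : ℂ) := fun z => by
    rw [Complex.conj_mul', Complex.ofReal_pow]
  simpa only [key, integral_complex_ofReal, Complex.ofReal_re] using h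

lemma torusNorm_eq {d : ℕ} (x : Fin d → AddCircle (1:ℝ)) :
    torusNorm x = ‖WithLp.toLp 2 x‖ := by
  rw [PiLp.norm_eq_of_L2]; rfl

lemma abs_torusNorm_sub_le {d : ℕ} (x y : Fin d → AddCircle (1:ℝ)) :
    |torusNorm (x - y) - torusNorm x| ≤ torusNorm y := by
  simp only [torusNorm_eq, WithLp.toLp_sub]
  refine (abs_norm_sub_norm_le _ _).trans ?_
  simp

lemma measurable_torusNorm {d : ℕ} :
    Measurable (torusNorm : (Fin d → AddCircle (1:ℝ)) → ℝ) := by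
  unfold torusNorm
  fun_prop

lemma torusNorm_le_of_forall_le {d : ℕ} {x : Fin d → AddCircle (1:ℝ)} {h : ℝ} (hh : 0 ≤ h)
    (hx : ∀ i, ‖x i‖ ≤ h) : torusNorm x ≤ Real.sqrt d * h := by
  unfold torusNorm
  rw [Real.sqrt_le_left (by positivity), mul_pow, Real.sq_sqrt (by positivity)]
  calc ∑ i, ‖x i‖ ^ 2 ≤ ∑ _i : Fin d, h ^ 2 := by gcongr; exact hx _
    _ = d * h ^ 2 := by simp

/-- A shell in Euclidean space has volume at most linear in its thickness. -/
lemma volume_shell_le (d : ℕ) (hd : 1 ≤ d) : ∃ C : ℝ, 0 < C ∧ ∀ r t : ℝ, 0 ≤ r → 0 ≤ t →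
    r + t ≤ d + 1 →
    volume {y : Fin d → ℝ | r ≤ Real.sqrt (∑ i, y i ^ 2) ∧ Real.sqrt (∑ i, y i ^ 2) ≤ r + t}
      ≤ ENNReal.ofReal (C * t) := by
  have : Nonempty (Fin d) := ⟨⟨0, hd⟩⟩
  set B := volume (Metric.ball (0 : EuclideanSpace ℝ (Fin d)) 1) with hB
  have hBtop : B ≠ ⊤ := measure_ball_lt_top.ne
  obtain ⟨b, hb0, hb⟩ : ∃ b : ℝ, 0 ≤ b ∧ B = ENNReal.ofReal b :=
    ⟨B.toReal, ENNReal.toReal_nonneg, (ENNReal.ofReal_toReal hBtop).symm⟩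
  refine ⟨d * (d + 1) ^ (d - 1) * (b + 1), by positivity, fun r t hr ht hrt => ?_⟩
  have h1 : volume {y : Fin d → ℝ | r ≤ Real.sqrt (∑ i, y i ^ 2) ∧
      Real.sqrt (∑ i, y i ^ 2) ≤ r + t}
      = volume (Metric.closedBall (0 : EuclideanSpace ℝ (Fin d)) (r + t) \ Metric.ball 0 r) := by
    rw [← (PiLp.volume_preserving_ofLp (Fin d)).measure_preimage]
    · congr 1
      ext x
      simp [EuclideanSpace.norm_eq, and_comm]
    · apply MeasurableSet.nullMeasurableSet
      measurability
  rw [h1, measure_sdiff (Metric.ball_subset_closedBall.trans (Metric.closedBall_subset_closedBall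
    (by linarith))) measurableSet_ball.nullMeasurableSet measure_ball_lt_top.ne,
    Measure.addHaar_closedBall _ _ (by positivity), Measure.addHaar_ball _ _ hr,
    finrank_euclideanSpace_fin, ← hB, hb,
    ← ENNReal.ofReal_mul (by positivity), ← ENNReal.ofReal_mul (by positivity),
    ← ENNReal.ofReal_sub _ (by positivity)]
  apply ENNReal.ofReal_le_ofReal
  have h2 : (r + t) ^ d - r ^ d ≤ t * (d * (d + 1) ^ (d - 1)) := by
    have hg := geom_sum₂_mul (r + t) r d
    rw [← hg, add_sub_cancel_left, mul_comm]
    gcongr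
    calc ∑ i ∈ Finset.range d, (r + t) ^ i * r ^ (d - 1 - i)
        ≤ ∑ i ∈ Finset.range d, ((d:ℝ) + 1) ^ (d - 1) := by
          apply Finset.sum_le_sum
          intro i hi
          have hi' := Finset.mem_range.mp hi
          calc (r + t) ^ i * r ^ (d - 1 - i) ≤ ((d:ℝ) + 1) ^ i * ((d:ℝ) + 1) ^ (d - 1 - i) := by
                gcongr; linarith
            _ = _ := by rw [← pow_add]; congr 1; omega
      _ = _ := by simp
  calc (r + t) ^ d * b - r ^ d * b = ((r + t) ^ d - r ^ d) * b := by ring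
    _ ≤ (t * (d * (d + 1) ^ (d - 1))) * b := by gcongr
    _ ≤ (t * (d * (d + 1) ^ (d - 1))) * (b + 1) := by gcongr; linarith
    _ = _ := by ring

lemma torusNorm_le_dim {d : ℕ} (x : Fin d → AddCircle (1:ℝ)) : torusNorm x ≤ d := by
  have h1 : ∀ i, ‖x i‖ ≤ 1 := fun i => (AddCircle.norm_le_half_period 1 one_ne_zero).trans
    (by norm_num)
  refine (torusNorm_le_of_forall_le zero_le_one h1).trans ?_
  rw [mul_one]
  apply Real.sqrt_le_iff.mpr
  refine ⟨by positivity, ?_⟩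
  have : d ≤ d ^ 2 := Nat.le_self_pow two_ne_zero d
  exact_mod_cast this

lemma volume_torus_le (d : ℕ) (s : Set (Fin d → AddCircle (1:ℝ))) (hs : MeasurableSet s) :
    volume s ≤ volume {y : Fin d → ℝ | (∀ i, |y i| ≤ 1 / 2) ∧
      (fun i => (y i : AddCircle (1:ℝ))) ∈ s} := by
  have h1 : (volume : Measure (Fin d → AddCircle (1:ℝ))) =
      (volume.restrict (Set.univ.pi fun _ => Set.Ioc (-(1/2) : ℝ) (-(1/2) + 1))).map
        (fun y i => ((y i : ℝ) : AddCircle (1:ℝ))) := by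
    have := (measurePreserving_pi _ _
      (fun _ : Fin d => AddCircle.measurePreserving_mk 1 (-(1/2) : ℝ))).map_eq
    rw [volume_pi, ← this, volume_pi, Measure.restrict_pi_pi]
  have hm : Measurable (fun (y : Fin d → ℝ) i => ((y i : ℝ) : AddCircle (1:ℝ))) :=
    measurable_pi_lambda _ fun i => AddCircle.measurable_mk'.comp (measurable_pi_apply i)
  rw [h1, Measure.map_apply hm hs, Measure.restrict_apply (hm hs)]
  apply measure_mono
  rintro y ⟨hy1, hy2⟩
  refine ⟨fun i => ?_, hy1⟩
  have := hy2 i (Set.mem_univ _)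
  rw [abs_le]
  constructor <;> [linarith [this.1]; linarith [this.2]]

lemma volume_torus_shell_le (d : ℕ) (hd : 1 ≤ d) : ∃ C : ℝ, 0 < C ∧ ∀ r t : ℝ, 0 ≤ t →
    (volume {x : Fin d → AddCircle (1:ℝ) | r ≤ torusNorm x ∧ torusNorm x ≤ r + t}).toReal
      ≤ C * t := by
  obtain ⟨C, hC, H⟩ := volume_shell_le d hd
  refine ⟨C + 1, by positivity, fun r t ht => ?_⟩
  have nonneg : ∀ x : Fin d → AddCircle (1:ℝ), 0 ≤ torusNorm x := fun x => Real.sqrt_nonneg _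
  rcases lt_or_ge 1 t with h1 | h1
  · calc (volume {x : Fin d → AddCircle (1:ℝ) | r ≤ torusNorm x ∧ torusNorm x ≤ r + t}).toReal
        ≤ 1 := ENNReal.toReal_le_of_le_ofReal zero_le_one (by simpa using prob_le_one)
      _ ≤ (C + 1) * t := by nlinarith
  rcases lt_or_ge (d : ℝ) r with h2 | h2
  · have : {x : Fin d → AddCircle (1:ℝ) | r ≤ torusNorm x ∧ torusNorm x ≤ r + t} = ∅ := by
      ext x
      simp only [Set.mem_ofPred_eq, Set.mem_empty_iff_false, iff_false, not_and]
      intro h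
      linarith [torusNorm_le_dim x]
    rw [this]; simp; positivity
  set r' := max r 0
  have hsub : {x : Fin d → AddCircle (1:ℝ) | r ≤ torusNorm x ∧ torusNorm x ≤ r + t} ⊆
      {x | r' ≤ torusNorm x ∧ torusNorm x ≤ r' + t} := by
    rintro x ⟨hx1, hx2⟩
    exact ⟨max_le hx1 (nonneg x), hx2.trans (by gcongr; exact le_max_left _ _)⟩
  apply ENNReal.toReal_le_of_le_ofReal (by positivity)
  calc _ ≤ volume {x : Fin d → AddCircle (1:ℝ) | r' ≤ torusNorm x ∧ torusNorm x ≤ r' + t} :=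
        measure_mono hsub
    _ ≤ _ := volume_torus_le d _ (measurableSet_le measurable_const measurable_torusNorm |>.inter
        (measurableSet_le measurable_torusNorm measurable_const))
    _ ≤ volume {y : Fin d → ℝ | r' ≤ Real.sqrt (∑ i, y i ^ 2) ∧
          Real.sqrt (∑ i, y i ^ 2) ≤ r' + t} := by
        apply measure_mono
        rintro y ⟨hy1, hy2⟩
        have : torusNorm (fun i => (y i : AddCircle (1:ℝ))) = Real.sqrt (∑ i, y i ^ 2) := by
          unfold torusNorm
          congr 1
          refine Finset.sum_congr rfl fun i _ => ?_
          rw [(AddCircle.norm_coe_eq_abs_iff 1 one_ne_zero).mpr (by simpa using hy1 i), sq_abs]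
        rwa [Set.mem_ofPred_eq, this] at hy2
    _ ≤ ENNReal.ofReal (C * t) := by
        apply H _ _ (le_max_right _ _) ht
        have : r' ≤ d := max_le h2 (by positivity)
        linarith
    _ ≤ _ := ENNReal.ofReal_le_ofReal (by gcongr; linarith)

/-- The normalised indicator function of the interval of half-width `h` around `0` in `ℝ/ℤ`. -/
noncomputable def boxKernel (h : ℝ) (x : AddCircle (1:ℝ)) : ℝ := if ‖x‖ ≤ h then (2 * h)⁻¹ else 0

/-- The normalised indicator function of the cube of half-width `h` around `0` in the torus. -/
noncomputable def torusBox {d : ℕ} (h : ℝ) (x : Fin d → AddCircle (1:ℝ)) : ℝ :=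
  ∏ i, boxKernel h (x i)

lemma measurable_boxKernel (h : ℝ) : Measurable (boxKernel h) :=
  Measurable.ite (measurableSet_le measurable_norm measurable_const) measurable_const
    measurable_const

lemma boxKernel_nonneg {h : ℝ} (hh : 0 < h) (x : AddCircle (1:ℝ)) : 0 ≤ boxKernel h x := by
  unfold boxKernel; split_ifs <;> positivity

lemma boxKernel_le {h : ℝ} (hh : 0 < h) (x : AddCircle (1:ℝ)) : boxKernel h x ≤ (2 * h)⁻¹ := by
  unfold boxKernel; split_ifs <;> [rfl; positivity]

lemma integral_mul_boxKernel {h : ℝ} (hh : 0 < h) (h2 : h < 1 / 2) (f : AddCircle (1:ℝ) → ℂ) :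
    ∫ x, f x * boxKernel h x = (2 * h)⁻¹ * ∫ x : ℝ in (-h)..h, f x := by
  rw [← AddCircle.intervalIntegral_preimage 1 (-(1/2)) (fun x => f x * boxKernel h x)]
  have h3 : ∀ x ∈ Set.uIcc (-(1/2) : ℝ) (-(1/2) + 1), f x * boxKernel h x =
      (Set.Icc (-h) h).indicator (fun x : ℝ => ((2 * h)⁻¹ : ℂ) * f x) x := by
    intro x hx
    rw [Set.uIcc_of_le (by norm_num)] at hx
    have hn : ‖(x : AddCircle (1:ℝ))‖ = |x| := by
      rw [AddCircle.norm_coe_eq_abs_iff 1 one_ne_zero, abs_one, abs_le]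
      constructor <;> [linarith [hx.1]; linarith [hx.2]]
    simp only [boxKernel, hn, abs_le, Set.indicator_apply, Set.mem_Icc]
    split_ifs <;> simp [mul_comm]
  have hI : Set.Ioc (-(1/2) : ℝ) (-(1/2) + 1) ∩ Set.Icc (-h) h = Set.Icc (-h) h :=
    Set.inter_eq_right.mpr fun x hx => ⟨by linarith [hx.1], by linarith [hx.2]⟩
  rw [intervalIntegral.integral_congr h3, intervalIntegral.integral_of_le (by norm_num),
    setIntegral_indicator measurableSet_Icc, intervalIntegral.integral_of_le (by linarith),
    ← integral_Icc_eq_integral_Ioc, hI, integral_const_mul]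
  simp

lemma integral_boxKernel {h : ℝ} (hh : 0 < h) (h2 : h < 1 / 2) : ∫ x, boxKernel h x = 1 := by
  have := integral_mul_boxKernel hh h2 (fun _ => 1)
  simp only [one_mul, intervalIntegral.integral_const, integral_complex_ofReal] at this
  have h3 : (((∫ x, boxKernel h x : ℝ)) : ℂ) = ((1 : ℝ) : ℂ) := by
    rw [this]
    have : (h : ℂ) ≠ 0 := by exact_mod_cast hh.ne'
    simp
    field_simp
    ring
  exact_mod_cast h3

lemma norm_integral_fourier_boxKernel_le {h : ℝ} (hh : 0 < h) (h2 : h < 1 / 2) {k : ℤ}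
    (hk : k ≠ 0) : ‖∫ x, fourier k x * (boxKernel h x : ℂ)‖ ≤ 1 / (h * |(k : ℝ)|) := by
  rw [integral_mul_boxKernel hh h2]
  have hkc : (2 * Real.pi * Complex.I * k : ℂ) ≠ 0 := by
    simp [Real.pi_ne_zero, hk]
  have h1 : ∀ x : ℝ, fourier k (x : AddCircle (1:ℝ)) =
      Complex.exp (2 * Real.pi * Complex.I * k * x) := fun x => by
    rw [fourier_coe_apply]; simp
  simp only [h1]
  rw [integral_exp_mul_complex hkc]
  have hb : ∀ t : ℝ, ‖Complex.exp (2 * Real.pi * Complex.I * k * t)‖ = 1 := fun t => by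
    rw [Complex.norm_exp]; simp
  have hkpos : 0 < |(k : ℝ)| := abs_pos.mpr (by exact_mod_cast hk)
  have hn : ‖(2 * Real.pi * Complex.I * k : ℂ)‖ = 2 * Real.pi * |(k : ℝ)| := by
    simp [abs_of_pos Real.pi_pos]
  have hn2 : ‖(((2 * h)⁻¹ : ℝ) : ℂ)‖ = (2 * h)⁻¹ := by
    simp [abs_of_pos hh]
  rw [norm_mul, norm_div, hn, hn2]
  have h4 := norm_sub_le (Complex.exp (2 * Real.pi * Complex.I * k * (h : ℝ)))
    (Complex.exp (2 * Real.pi * Complex.I * k * ((-h : ℝ))))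
  rw [hb, hb] at h4
  calc _ ≤ (2 * h)⁻¹ * ((1 + 1) / (2 * Real.pi * |(k : ℝ)|)) := by gcongr
    _ = 1 / (h * |(k : ℝ)|) * (1 / (2 * Real.pi)) := by field_simp; try ring
    _ ≤ 1 / (h * |(k : ℝ)|) * 1 := by
        gcongr
        rw [div_le_one (by positivity)]
        linarith [Real.pi_gt_three]
    _ = _ := mul_one _

lemma measurable_torusBox {d : ℕ} (h : ℝ) :
    Measurable (torusBox h : (Fin d → AddCircle (1:ℝ)) → ℝ) :=
  Finset.measurable_prod _ fun i _ => (measurable_boxKernel h).comp (measurable_pi_apply i)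

lemma torusBox_nonneg {d : ℕ} {h : ℝ} (hh : 0 < h) (x : Fin d → AddCircle (1:ℝ)) :
    0 ≤ torusBox h x :=
  Finset.prod_nonneg fun _ _ => boxKernel_nonneg hh _

lemma torusBox_le {d : ℕ} {h : ℝ} (hh : 0 < h) (x : Fin d → AddCircle (1:ℝ)) :
    torusBox h x ≤ (2 * h)⁻¹ ^ d := by
  refine (Finset.prod_le_prod (fun _ _ => boxKernel_nonneg hh _)
    (fun _ _ => boxKernel_le hh _)).trans ?_
  simp

lemma torusNorm_le_of_torusBox_ne_zero {d : ℕ} {h : ℝ} (hh : 0 < h)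
    {x : Fin d → AddCircle (1:ℝ)} (hx : torusBox h x ≠ 0) : torusNorm x ≤ Real.sqrt d * h := by
  refine torusNorm_le_of_forall_le hh.le fun i => ?_
  have := Finset.prod_ne_zero_iff.mp hx i (Finset.mem_univ _)
  unfold boxKernel at this
  by_contra hc
  exact this (if_neg hc)

lemma integral_torusBox {d : ℕ} {h : ℝ} (hh : 0 < h) (h2 : h < 1 / 2) :
    ∫ x : Fin d → AddCircle (1:ℝ), torusBox h x = 1 := by
  unfold torusBox
  rw [integral_fintype_prod_volume_eq_prod (fun (_ : Fin d) x => boxKernel h x)]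
  simp [integral_boxKernel hh h2]

lemma memLp_of_bounded {d : ℕ} {f : (Fin d → AddCircle (1:ℝ)) → ℝ} (hf : Measurable f) {C : ℝ}
    (hC : ∀ x, |f x| ≤ C) (p : ENNReal) : MemLp (fun x => (f x : ℂ)) p :=
  MemLp.of_bound (Complex.measurable_ofReal.comp hf).aestronglyMeasurable C
    (ae_of_all _ fun x => by simpa using hC x)

/-- The Fourier multiplier of the cube average. -/
noncomputable def boxMult {d : ℕ} (h : ℝ) (k : Fin d → ℤ) : ℂ :=
  torusCoeff (fun x => (torusBox h x : ℂ)) k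

lemma boxMult_eq_prod {d : ℕ} (h : ℝ) (k : Fin d → ℤ) :
    boxMult h k = ∏ i, ∫ x, fourier (-k i) x * (boxKernel h x : ℂ) := by
  rw [← integral_fintype_prod_volume_eq_prod (fun i x => fourier (-k i) x * (boxKernel h x : ℂ)),
    boxMult, torusCoeff]
  simp [torusBox, mFourier, Finset.prod_mul_distrib]

lemma norm_mFourier_apply {d : ℕ} (k : Fin d → ℤ) (x : Fin d → AddCircle (1:ℝ)) :
    ‖mFourier k x‖ = 1 := by
  simp only [mFourier, fourier_apply, ContinuousMap.coe_mk, norm_prod, Circle.norm_coe,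
    Finset.prod_const_one]

lemma mFourier_apply_sub {d : ℕ} (k : Fin d → ℤ) (x y : Fin d → AddCircle (1:ℝ)) :
    mFourier k (x - y) = mFourier k x * conj (mFourier k y) := by
  rw [← mFourier_neg]
  simp only [mFourier, ContinuousMap.coe_mk, ← Finset.prod_mul_distrib]
  refine Finset.prod_congr rfl fun i _ => ?_
  simp [fourier_apply, AddCircle.toCircle_add, sub_eq_add_neg]

lemma norm_torusCoeff_le {d : ℕ} {f : (Fin d → AddCircle (1:ℝ)) → ℝ} (h0 : ∀ x, 0 ≤ f x)
    (k : Fin d → ℤ) : ‖torusCoeff (fun x => (f x : ℂ)) k‖ ≤ ∫ x, f x := by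
  refine (norm_integral_le_integral_norm _).trans (le_of_eq ?_)
  refine integral_congr_ae (ae_of_all _ fun x => ?_)
  simp [norm_mFourier_apply, h0 x]

lemma boxMult_zero {d : ℕ} {h : ℝ} (hh : 0 < h) (h2 : h < 1 / 2) :
    boxMult h (0 : Fin d → ℤ) = 1 := by
  have := integral_torusBox (d := d) hh h2
  simp [boxMult, torusCoeff, mFourier_zero, integral_complex_ofReal, this]

/-- Convolution on the torus. -/
noncomputable def torusConv {d : ℕ} (f g : (Fin d → AddCircle (1:ℝ)) → ℝ)
    (x : Fin d → AddCircle (1:ℝ)) : ℝ := ∫ y, f (x - y) * g y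

lemma measurable_torusConv {d : ℕ} {f g : (Fin d → AddCircle (1:ℝ)) → ℝ} (hf : Measurable f)
    (hg : Measurable g) : Measurable (torusConv f g) := by
  have : StronglyMeasurable (fun p : (Fin d → AddCircle (1:ℝ)) × (Fin d → AddCircle (1:ℝ)) =>
      f (p.1 - p.2) * g p.2) :=
    ((hf.comp (measurable_fst.sub measurable_snd)).mul (hg.comp measurable_snd)).stronglyMeasurable
  exact this.integral_prod_right'.measurable

lemma torusConv_eq_of_forall {d : ℕ} {f g : (Fin d → AddCircle (1:ℝ)) → ℝ} (hg : ∫ y, g y = 1)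
    {x : Fin d → AddCircle (1:ℝ)} {c : ℝ} (h : ∀ y, g y ≠ 0 → f (x - y) = c) :
    torusConv f g x = c := by
  have : ∀ y, f (x - y) * g y = c * g y := fun y => by
    by_cases hy : g y = 0
    · simp [hy]
    · rw [h y hy]
  simp only [torusConv, this, integral_const_mul, hg, mul_one]

lemma torusConv_nonneg {d : ℕ} {f g : (Fin d → AddCircle (1:ℝ)) → ℝ} (hf : ∀ x, 0 ≤ f x)
    (hg : ∀ x, 0 ≤ g x) (x : Fin d → AddCircle (1:ℝ)) : 0 ≤ torusConv f g x :=
  integral_nonneg fun y => mul_nonneg (hf _) (hg y)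

lemma torusConv_le_one {d : ℕ} {f g : (Fin d → AddCircle (1:ℝ)) → ℝ} 
    (hf0 : ∀ x, 0 ≤ f x) (hf : ∀ x, f x ≤ 1) (hg : ∀ x, 0 ≤ g x) (hg1 : ∫ y, g y = 1)
    (x : Fin d → AddCircle (1:ℝ)) : torusConv f g x ≤ 1 := by
  rw [← hg1]
  refine integral_mono_of_nonneg (ae_of_all _ fun y => mul_nonneg (hf0 _) (hg y)) ?_
    (ae_of_all _ fun y => mul_le_of_le_one_left (hg y) (hf _))
  by_contra h
  rw [integral_undef h] at hg1
  exact zero_ne_one hg1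

lemma torusCoeff_torusConv {d : ℕ} {f g : (Fin d → AddCircle (1:ℝ)) → ℝ} (hf : Measurable f)
    (hg : Measurable g) {C D : ℝ} (hC : ∀ x, |f x| ≤ C) (hD : ∀ x, |g x| ≤ D) (k : Fin d → ℤ) :
    torusCoeff (fun x => (torusConv f g x : ℂ)) k =
      torusCoeff (fun x => (f x : ℂ)) k * torusCoeff (fun x => (g x : ℂ)) k := by
  have h1 : ∀ x, mFourier (-k) x * (torusConv f g x : ℂ) =
      ∫ y, mFourier (-k) x * (f (x - y) * g y : ℂ) := fun x => by
    rw [integral_const_mul, torusConv, ← integral_complex_ofReal]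
    simp
  simp only [torusCoeff, h1]
  rw [integral_integral_swap]
  · have h2 : ∀ y x : Fin d → AddCircle (1:ℝ), mFourier (-k) x * (f (x - y) * g y : ℂ) =
        (mFourier (-k) (x - y) * f (x - y)) * (mFourier (-k) y * g y) := fun y x => by
      have : mFourier (-k) x = mFourier (-k) (x - y) * mFourier (-k) y := by
        rw [mFourier_apply_sub, mul_assoc, Complex.conj_mul', norm_mFourier_apply]
        simp
      rw [this]; ring
    have h3 : ∀ y : Fin d → AddCircle (1:ℝ), ∫ x, (mFourier (-k) (x - y) * (f (x - y) : ℂ)) =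
        ∫ x, mFourier (-k) x * f x := fun y =>
      integral_sub_right_eq_self (fun x => mFourier (-k) x * (f x : ℂ)) y
    simp only [h2, integral_mul_const, h3, integral_const_mul]
  · refine Integrable.of_bound (C := C * D) ?_ (ae_of_all _ fun p => ?_)
    · refine Measurable.aestronglyMeasurable ?_
      refine Measurable.mul ((mFourier (-k)).continuous.measurable.comp measurable_fst) ?_
      exact (Complex.measurable_ofReal.comp (hf.comp (measurable_fst.sub measurable_snd))).mul
        (Complex.measurable_ofReal.comp (hg.comp measurable_snd))
    · have := (abs_nonneg _).trans (hC 0)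
      simp only [Function.uncurry, norm_mul, norm_mFourier_apply, one_mul, Complex.norm_real,
        Real.norm_eq_abs]
      gcongr
      exacts [hC _, hD _]

instance isNegInvariant_volume_torus (d : ℕ) :
    (volume : Measure (Fin d → AddCircle (1:ℝ))).IsNegInvariant :=
  Measure.IsAddHaarMeasure.isNegInvariant_of_regular _

/-- Pointwise Fourier expansion of a convolution of bounded functions. -/
lemma hasSum_torusConv {d : ℕ} {f g : (Fin d → AddCircle (1:ℝ)) → ℝ} (hf : Measurable f)
    (hg : Measurable g) {C D : ℝ} (hC : ∀ x, |f x| ≤ C) (hD : ∀ x, |g x| ≤ D)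
    (x : Fin d → AddCircle (1:ℝ)) :
    HasSum (fun k => conj (torusCoeff (fun x => (f x : ℂ)) k * torusCoeff (fun x => (g x : ℂ)) k *
      mFourier k x)) (torusConv f g x : ℂ) := by
  have hg' : Measurable fun y => g (x - y) := hg.comp (measurable_const.sub measurable_id)
  have h := hasSum_conj_torusCoeff_mul (memLp_of_bounded hf hC 2)
    (memLp_of_bounded hg' (fun y => hD (x - y)) 2)
  convert! h using 1
  · ext k
    rw [mul_assoc, map_mul]
    congr 1
    simp only [torusCoeff]
    rw [← integral_sub_left_eq_self (fun y => mFourier (-k) y * (g (x - y) : ℂ)) volume x]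
    simp only [sub_sub_cancel, mFourier_apply_sub, mFourier_neg, Complex.conj_conj, map_mul,
      mul_assoc, integral_const_mul]
    rw [← integral_conj, mul_comm]
    simp
  · rw [torusConv, ← integral_complex_ofReal, ← integral_sub_left_eq_self _ volume x]
    simp

/-- The indicator function of a toral annulus. -/
noncomputable def annulusFn {d : ℕ} (a b : ℝ) (x : Fin d → AddCircle (1:ℝ)) : ℝ :=
  {x : Fin d → AddCircle (1:ℝ) | a ≤ torusNorm x ∧ torusNorm x ≤ b}.indicator 1 x

lemma annulusFn_apply {d : ℕ} (a b : ℝ) (x : Fin d → AddCircle (1:ℝ)) [Decidable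
    (a ≤ torusNorm x ∧ torusNorm x ≤ b)] :
    annulusFn a b x = if a ≤ torusNorm x ∧ torusNorm x ≤ b then 1 else 0 := by
  simp only [annulusFn, Set.indicator_apply, Set.mem_ofPred_eq, Pi.one_apply]

lemma measurableSet_annulus {d : ℕ} (a b : ℝ) :
    MeasurableSet {x : Fin d → AddCircle (1:ℝ) | a ≤ torusNorm x ∧ torusNorm x ≤ b} :=
  (measurableSet_le measurable_const measurable_torusNorm).inter
    (measurableSet_le measurable_torusNorm measurable_const)

lemma measurable_annulusFn {d : ℕ} (a b : ℝ) :
    Measurable (annulusFn a b : (Fin d → AddCircle (1:ℝ)) → ℝ) :=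
  measurable_one.indicator (measurableSet_annulus a b)

lemma annulusFn_nonneg {d : ℕ} (a b : ℝ) (x : Fin d → AddCircle (1:ℝ)) : 0 ≤ annulusFn a b x :=
  Set.indicator_nonneg (fun _ _ => zero_le_one) _

lemma annulusFn_le_one {d : ℕ} (a b : ℝ) (x : Fin d → AddCircle (1:ℝ)) : annulusFn a b x ≤ 1 :=
  Set.indicator_le_self' (fun _ _ => zero_le_one) _

lemma abs_annulusFn_le_one {d : ℕ} (a b : ℝ) (x : Fin d → AddCircle (1:ℝ)) :
    |annulusFn a b x| ≤ 1 := by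
  rw [abs_of_nonneg (annulusFn_nonneg a b x)]
  exact annulusFn_le_one a b x

lemma integral_annulusFn {d : ℕ} (a b : ℝ) : ∫ x : Fin d → AddCircle (1:ℝ), annulusFn a b x =
    (volume {x : Fin d → AddCircle (1:ℝ) | a ≤ torusNorm x ∧ torusNorm x ≤ b}).toReal := by
  unfold annulusFn
  rw [integral_indicator_one (measurableSet_annulus a b)]
  rfl

/-- Averaging the indicator function of an annulus at scale `h` changes nothing away from the
boundary of the annulus. -/
lemma torusConv_annulusFn_eq {d : ℕ} {a b h : ℝ} (hh : 0 < h) (h2 : h < 1 / 2)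
    {x : Fin d → AddCircle (1:ℝ)} (ha : Real.sqrt d * h < |torusNorm x - a|)
    (hb : Real.sqrt d * h < |torusNorm x - b|) :
    torusConv (annulusFn a b) (torusBox h) x = annulusFn a b x := by
  classical
  refine torusConv_eq_of_forall (integral_torusBox hh h2) fun y hy => ?_
  have h1 := (abs_torusNorm_sub_le x y).trans (torusNorm_le_of_torusBox_ne_zero hh hy)
  rw [annulusFn_apply, annulusFn_apply]
  rw [abs_le] at h1
  have ha' : a ≤ torusNorm (x - y) ↔ a ≤ torusNorm x := by
    rcases lt_abs.mp ha with ha | ha <;> constructor <;> intro <;> linarith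
  have hb' : torusNorm (x - y) ≤ b ↔ torusNorm x ≤ b := by
    rcases lt_abs.mp hb with hb | hb <;> constructor <;> intro <;> linarith
  simp only [ha', hb']

lemma sum_sq_annulus_coeff_le (d : ℕ) (hd : 1 ≤ d) : ∃ C : ℝ, 0 < C ∧ ∀ a b h : ℝ, 0 < h →
    2 * h < 1 / 2 → ∀ s : Finset (Fin d → ℤ),
    ∑ k ∈ s, (‖torusCoeff (fun x => (annulusFn a b x : ℂ)) k‖ *
      ‖boxMult h k - boxMult (2 * h) k‖) ^ 2 ≤ C * h := by
  obtain ⟨C, hC, H⟩ := volume_torus_shell_le d hd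
  refine ⟨2 * (C * (4 * Real.sqrt d)) , by positivity, fun a b h hh h2 s => ?_⟩
  set D : (Fin d → AddCircle (1:ℝ)) → ℝ := fun x =>
    torusConv (annulusFn a b) (torusBox h) x - torusConv (annulusFn a b) (torusBox (2 * h)) x
  have hm := measurable_annulusFn (d := d) a b
  have hbd : ∀ h > 0, ∀ x : Fin d → AddCircle (1:ℝ), |torusBox h x| ≤ (2 * h)⁻¹ ^ d :=
    fun h hh x => by rw [abs_of_nonneg (torusBox_nonneg hh x)]; exact torusBox_le hh x
  have hc0 : ∀ h > 0, ∀ x : Fin d → AddCircle (1:ℝ),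
      0 ≤ torusConv (annulusFn a b) (torusBox h) x := fun h hh =>
    torusConv_nonneg (annulusFn_nonneg a b) (torusBox_nonneg hh)
  have hc1 : ∀ h > 0, h < 1 / 2 → ∀ x : Fin d → AddCircle (1:ℝ),
      torusConv (annulusFn a b) (torusBox h) x ≤ 1 := fun h hh h2 =>
    torusConv_le_one (annulusFn_nonneg a b) (annulusFn_le_one a b) (torusBox_nonneg hh)
      (integral_torusBox hh h2)
  have hcm : ∀ h, Measurable
      (torusConv (annulusFn a b) (torusBox h) : (Fin d → AddCircle (1:ℝ)) → ℝ) :=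
    fun h => measurable_torusConv hm (measurable_torusBox h)
  have hDm : Measurable D := (hcm _).sub (hcm _)
  have h2' : 0 < 2 * h := by positivity
  have hD1 : ∀ x, |D x| ≤ 1 := fun x => by
    rw [abs_le]
    have := hc0 h hh x
    have := hc0 (2 * h) h2' x
    have := hc1 h hh (by linarith) x
    have := hc1 (2 * h) h2' h2 x
    constructor <;> simp only [D] <;> linarith
  have hcoeff : ∀ k, torusCoeff (fun x => (D x : ℂ)) k =
      torusCoeff (fun x => (annulusFn a b x : ℂ)) k * (boxMult h k - boxMult (2 * h) k) := by
    intro k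
    have hint : ∀ h > 0, h < 1 / 2 → Integrable fun x : Fin d → AddCircle (1:ℝ) =>
        mFourier (-k) x * ((torusConv (annulusFn a b) (torusBox h) x : ℝ) : ℂ) :=
      fun h hh h2 => by
        refine Integrable.of_bound (C := 1) (Measurable.aestronglyMeasurable
          ((mFourier (-k)).continuous.measurable.mul
          (Complex.measurable_ofReal.comp (hcm h)))) (ae_of_all _ fun x => ?_)
        rw [norm_mul, norm_mFourier_apply, one_mul, Complex.norm_real, Real.norm_eq_abs,
          abs_of_nonneg (hc0 h hh x)]
        exact hc1 h hh h2 x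
    rw [mul_sub, boxMult, boxMult,
      ← torusCoeff_torusConv hm (measurable_torusBox h) (abs_annulusFn_le_one a b) (hbd h hh),
      ← torusCoeff_torusConv hm (measurable_torusBox _) (abs_annulusFn_le_one a b) (hbd _ h2'),
      torusCoeff, torusCoeff, torusCoeff,
      ← integral_sub (hint h hh (by linarith)) (hint _ h2' h2)]
    simp [D, mul_sub]
  have hsum := hasSum_sq_torusCoeff (memLp_of_bounded hDm hD1 2)
  set c := Real.sqrt d * (2 * h)
  have hc : 0 ≤ c := by positivity
  set A : ℝ → Set (Fin d → AddCircle (1:ℝ)) := fun r =>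
    {x | r ≤ torusNorm x ∧ torusNorm x ≤ r + 2 * c}
  have hAm : ∀ r, MeasurableSet (A r) := fun r => measurableSet_annulus _ _
  calc ∑ k ∈ s, (‖torusCoeff (fun x => (annulusFn a b x : ℂ)) k‖ *
      ‖boxMult h k - boxMult (2 * h) k‖) ^ 2
      = ∑ k ∈ s, ‖torusCoeff (fun x => (D x : ℂ)) k‖ ^ 2 := by simp only [hcoeff, norm_mul]
    _ ≤ ∫ x, ‖(D x : ℂ)‖ ^ 2 := sum_le_hasSum s (fun _ _ => by positivity) hsum
    _ ≤ ∫ x, ((A (a - c)).indicator (fun _ => (1:ℝ)) x +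
        (A (b - c)).indicator (fun _ => (1:ℝ)) x) := by
        refine integral_mono_of_nonneg (ae_of_all _ fun x => by positivity)
          (((integrable_const (1:ℝ)).indicator (hAm _)).add
            ((integrable_const (1:ℝ)).indicator (hAm _))) (ae_of_all _ fun x => ?_)
        have i0 : ∀ r, 0 ≤ (A r).indicator (fun _ => (1:ℝ)) x := fun r =>
          Set.indicator_nonneg (fun _ _ => zero_le_one) _
        have hle : ‖(D x : ℂ)‖ ^ 2 ≤ 1 := by
          rw [Complex.norm_real]
          exact pow_le_one₀ (norm_nonneg _) (hD1 x)
        have key : ∀ r, |torusNorm x - r| ≤ c → (A (r - c)).indicator (fun _ => (1:ℝ)) x = 1 := by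
          intro r hr
          rw [abs_le] at hr
          rw [Set.indicator_of_mem]
          constructor <;> linarith
        by_cases hxa : |torusNorm x - a| ≤ c
        · simp only [key a hxa]
          linarith [i0 (b - c)]
        by_cases hxb : |torusNorm x - b| ≤ c
        · simp only [key b hxb]
          linarith [i0 (a - c)]
        have hlt : Real.sqrt d * h ≤ c := by
          simp only [c]; gcongr; linarith
        have : D x = 0 := by
          simp only [D]
          rw [torusConv_annulusFn_eq hh (by linarith) (by linarith) (by linarith),
            torusConv_annulusFn_eq h2' h2 (by linarith) (by linarith), sub_self]
        simp only [this, Complex.ofReal_zero, norm_zero, ne_eq, OfNat.ofNat_ne_zero,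
          not_false_eq_true, zero_pow]
        linarith [i0 (a - c), i0 (b - c)]
    _ = (volume (A (a - c))).toReal + (volume (A (b - c))).toReal := by
        rw [integral_add ((integrable_const (1:ℝ)).indicator (hAm _))
            ((integrable_const (1:ℝ)).indicator (hAm _)),
          integral_indicator_const _ (hAm _), integral_indicator_const _ (hAm _), smul_eq_mul,
          smul_eq_mul, mul_one, mul_one]
        rfl
    _ ≤ C * (2 * c) + C * (2 * c) := add_le_add (H _ _ (by positivity)) (H _ _ (by positivity))
    _ = _ := by simp only [c]; ring

/-- A product weight on frequencies dominating small powers of the Euclidean norm. -/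
noncomputable def freqWeight {d : ℕ} (σ : ℝ) (k : Fin d → ℤ) : ℝ := ∏ i, (1 + |(k i : ℝ)|) ^ σ

lemma intNorm_rpow_le_freqWeight {d : ℕ} {σ : ℝ} (hσ : 0 ≤ σ) (k : Fin d → ℤ) :
    intNorm k ^ σ ≤ freqWeight σ k := by
  rw [freqWeight, Real.finsetProd_rpow _ _ (fun _ _ => by positivity)]
  refine Real.rpow_le_rpow (Real.sqrt_nonneg _) ?_ hσ
  apply Real.sqrt_le_iff.mpr ⟨by positivity, ?_⟩
  rw [← Finset.prod_pow]
  calc ∑ i, (k i : ℝ) ^ 2 ≤ ∏ i, (1 + (k i : ℝ) ^ 2) := by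
        have : ∀ s : Finset (Fin d), 1 + ∑ i ∈ s, (k i : ℝ) ^ 2 ≤ ∏ i ∈ s, (1 + (k i : ℝ) ^ 2) := by
          intro s
          induction s using Finset.induction_on with
          | empty => simp
          | insert i s hi ih =>
            rw [Finset.sum_insert hi, Finset.prod_insert hi]
            have : 0 ≤ ∑ i ∈ s, (k i : ℝ) ^ 2 := Finset.sum_nonneg fun _ _ => sq_nonneg _
            nlinarith [sq_nonneg (k i : ℝ)]
        linarith [this Finset.univ]
    _ ≤ _ := by
        refine Finset.prod_le_prod (fun _ _ => by positivity) fun i _ => ?_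
        have := abs_nonneg (k i : ℝ)
        rw [add_sq, sq_abs]
        linarith

lemma one_le_freqWeight {d : ℕ} {σ : ℝ} (hσ : 0 ≤ σ) (k : Fin d → ℤ) : 1 ≤ freqWeight σ k := by
  have : ∏ _i : Fin d, (1:ℝ) ≤ freqWeight σ k :=
    Finset.prod_le_prod (fun _ _ => zero_le_one) fun i _ =>
      Real.one_le_rpow (by linarith [abs_nonneg (k i : ℝ)]) hσ
  simpa using this

lemma sum_freqWeight_boxMult_le (d : ℕ) {σ : ℝ} (hσ : 0 < σ) (hσ' : σ ≤ 1 / 4) :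
    ∃ U : ℝ, 0 < U ∧ ∀ h : ℝ, 0 < h → h < 1 / 2 → ∀ s : Finset (Fin d → ℤ),
      ∑ k ∈ s, (freqWeight σ k * ‖boxMult h k‖) ^ 2 ≤ U * h ^ (-(d * (1 + 3 * σ))) := by
  classical
  set u : ℤ → ℝ := fun k => 2 * |(k : ℝ)| ^ (-(1 + σ)) + if k = 0 then 1 else 0
  have hu0 : ∀ k, 0 ≤ u k := fun k => by
    simp only [u]
    split_ifs <;> positivity
  have hu : Summable u := ((Real.summable_abs_int_rpow (by linarith)).mul_left 2).add
    (hasSum_ite_eq 0 1).summable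
  refine ⟨(∑' k, u k + 1) ^ d, pow_pos (add_pos_of_nonneg_of_pos (tsum_nonneg hu0) one_pos) _,
    fun h hh h2 s => ?_⟩
  set c : ℤ → ℝ := fun k =>
    ((1 + |(k : ℝ)|) ^ σ * ‖∫ x, fourier (-k) x * (boxKernel h x : ℂ)‖) ^ 2
  have hc : ∀ k, c k ≤ h ^ (-(1 + 3 * σ)) * u k := by
    intro k
    rcases eq_or_ne k 0 with rfl | hk
    · simp only [c, u, neg_zero, fourier_zero, one_mul, integral_complex_ofReal,
        integral_boxKernel hh h2]
      rw [Int.cast_zero, abs_zero, Real.zero_rpow (by linarith)]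
      simp only [add_zero, Real.one_rpow, Complex.ofReal_one, norm_one, mul_one, one_pow, if_true,
        mul_zero, zero_add]
      exact Real.one_le_rpow_of_pos_of_le_one_of_nonpos hh (by linarith) (by linarith)
    have hk1 : (1:ℝ) ≤ |(k : ℝ)| := by exact_mod_cast Int.one_le_abs hk
    have hkp : 0 < |(k : ℝ)| := by linarith
    set n := ‖∫ x, fourier (-k) x * (boxKernel h x : ℂ)‖
    have n1 : n ≤ 1 := by
      refine (norm_integral_le_integral_norm _).trans (le_of_eq ?_)
      refine Eq.trans ?_ (integral_boxKernel hh h2)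
      refine integral_congr_ae (ae_of_all _ fun x => ?_)
      simp only [norm_mul, fourier_apply, Circle.norm_coe, one_mul, Complex.norm_real,
        Real.norm_of_nonneg (boxKernel_nonneg hh x)]
    have n2 : n ≤ (h * |(k : ℝ)|)⁻¹ := by
      have := norm_integral_fourier_boxKernel_le hh h2 (neg_ne_zero.mpr hk)
      rwa [one_div, Int.cast_neg, abs_neg] at this
    have n3 : n ^ 2 ≤ (h * |(k : ℝ)|) ^ (-(1 + 3 * σ)) := by
      rcases le_total 1 (h * |(k : ℝ)|) with h1 | h1
      · calc n ^ 2 ≤ (h * |(k : ℝ)|)⁻¹ ^ 2 := by gcongr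
          _ = (h * |(k : ℝ)|) ^ (-2 : ℝ) := by
            rw [Real.rpow_neg (by positivity), inv_pow]; norm_cast
          _ ≤ _ := Real.rpow_le_rpow_of_exponent_le h1 (by linarith)
      · calc n ^ 2 ≤ 1 := pow_le_one₀ (norm_nonneg _) n1
          _ ≤ _ := Real.one_le_rpow_of_pos_of_le_one_of_nonpos (by positivity) h1 (by linarith)
    have w1 : ((1 + |(k : ℝ)|) ^ σ) ^ 2 ≤ 2 * |(k : ℝ)| ^ (2 * σ) := by
      calc ((1 + |(k : ℝ)|) ^ σ) ^ 2 = (1 + |(k : ℝ)|) ^ (2 * σ) := by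
            rw [← Real.rpow_natCast, ← Real.rpow_mul (by positivity)]
            congr 1; push_cast; ring
        _ ≤ (2 * |(k : ℝ)|) ^ (2 * σ) := by gcongr; linarith
        _ = 2 ^ (2 * σ) * |(k : ℝ)| ^ (2 * σ) := Real.mul_rpow (by positivity) (by positivity)
        _ ≤ 2 ^ (1:ℝ) * |(k : ℝ)| ^ (2 * σ) := by gcongr <;> linarith
        _ = _ := by rw [Real.rpow_one]
    calc c k = ((1 + |(k : ℝ)|) ^ σ) ^ 2 * n ^ 2 := by simp only [c, mul_pow]; rfl
      _ ≤ (2 * |(k : ℝ)| ^ (2 * σ)) * (h * |(k : ℝ)|) ^ (-(1 + 3 * σ)) := by gcongr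
      _ = h ^ (-(1 + 3 * σ)) * (2 * (|(k : ℝ)| ^ (2 * σ) * |(k : ℝ)| ^ (-(1 + 3 * σ)))) := by
          rw [Real.mul_rpow (by positivity) (by positivity)]; ring
      _ = h ^ (-(1 + 3 * σ)) * u k := by
          rw [← Real.rpow_add hkp]
          simp only [u, if_neg hk, add_zero]
          congr 3
          ring
  have hc0 : ∀ k, 0 ≤ c k := fun k => sq_nonneg _
  have hsum1 : ∀ t : Finset ℤ, ∑ k ∈ t, c k ≤ h ^ (-(1 + 3 * σ)) * (∑' k, u k + 1) := by
    intro t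
    calc ∑ k ∈ t, c k ≤ ∑ k ∈ t, h ^ (-(1 + 3 * σ)) * u k := Finset.sum_le_sum fun k _ => hc k
      _ = h ^ (-(1 + 3 * σ)) * ∑ k ∈ t, u k := by rw [Finset.mul_sum]
      _ ≤ _ := by
        gcongr
        linarith [hu.sum_le_tsum t (fun k _ => hu0 k)]
  set t : Fin d → Finset ℤ := fun i => s.image fun k => k i
  calc ∑ k ∈ s, (freqWeight σ k * ‖boxMult h k‖) ^ 2 = ∑ k ∈ s, ∏ i, c (k i) := by
        refine Finset.sum_congr rfl fun k _ => ?_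
        rw [boxMult_eq_prod, freqWeight, norm_prod, ← Finset.prod_mul_distrib, ← Finset.prod_pow]
    _ ≤ ∑ k ∈ Fintype.piFinset t, ∏ i, c (k i) := by
        refine Finset.sum_le_sum_of_subset_of_nonneg (fun k hk => ?_)
          (fun k _ _ => Finset.prod_nonneg fun i _ => hc0 _)
        exact Fintype.mem_piFinset.mpr fun i => Finset.mem_image_of_mem _ hk
    _ = ∏ i, ∑ j ∈ t i, c j := (Finset.prod_univ_sum t fun _ j => c j).symm
    _ ≤ ∏ _i : Fin d, (h ^ (-(1 + 3 * σ)) * (∑' k, u k + 1)) :=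
        Finset.prod_le_prod (fun _ _ => Finset.sum_nonneg fun _ _ => hc0 _) fun i _ => hsum1 _
    _ = _ := by
        rw [Finset.prod_const, Finset.card_univ, Fintype.card_fin, mul_pow, mul_comm,
          ← Real.rpow_natCast (h ^ _), ← Real.rpow_mul hh.le]
        congr 2
        ring

lemma norm_torusCoeff_annulusFn_le_one {d : ℕ} (a b : ℝ) (k : Fin d → ℤ) :
    ‖torusCoeff (fun x => (annulusFn a b x : ℂ)) k‖ ≤ 1 := by
  refine (norm_torusCoeff_le (annulusFn_nonneg a b) k).trans ?_
  rw [integral_annulusFn]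
  exact ENNReal.toReal_le_of_le_ofReal zero_le_one (by simpa using prob_le_one)

/-- Weighted summability of the Fourier coefficients of a smoothed annulus at dyadic scales. -/
lemma sum_annulus_boxMult_le (d : ℕ) (hd : 2 ≤ d) {σ : ℝ} (hσ : 0 < σ) (hσ' : σ ≤ 1 / 4) :
    ∃ K : ℝ, 0 < K ∧ ∀ a b : ℝ, ∀ j : ℕ, ∀ s : Finset (Fin d → ℤ),
      ∑ k ∈ s, ‖torusCoeff (fun x => (annulusFn a b x : ℂ)) k‖ *
        ‖boxMult ((1 / 4) * (1 / 2) ^ j) k‖ ^ 2 * freqWeight σ k ≤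
          K * ((1 / 4 : ℝ) * (1 / 2) ^ j) ^ (-((d * (1 + 3 * σ) - 1) / 2)) := by
  obtain ⟨C, hC, HC⟩ := sum_sq_annulus_coeff_le d (by omega)
  obtain ⟨U, hU, HU⟩ := sum_freqWeight_boxMult_le d hσ hσ'
  set q : ℝ := d * (1 + 3 * σ)
  set p : ℝ := (q - 1) / 2
  have hd' : (2:ℝ) ≤ d := by exact_mod_cast hd
  have hq : 2 ≤ q := by simp only [q]; nlinarith
  have hp : 0 < p := by simp only [p]; linarith
  have hw0 : ∀ k : Fin d → ℤ, 1 ≤ freqWeight σ k := one_le_freqWeight hσ.le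
  set E : ℝ := Real.sqrt (C * (4 * U)) with hE
  have h2p : (2:ℝ) ^ (-p) < 1 := Real.rpow_lt_one_of_one_lt_of_neg one_lt_two (by linarith)
  set K : ℝ := max (E / (1 - 2 ^ (-p))) (U * (1 / 4) ^ (-q)) with hK
  have hKpos : 0 < K := lt_max_of_lt_right (by positivity)
  have hKE : K * 2 ^ (-p) + E ≤ K := by
    have : E / (1 - 2 ^ (-p)) ≤ K := le_max_left _ _
    rw [div_le_iff₀ (by linarith)] at this
    linarith
  refine ⟨K, hKpos, fun a b j s => ?_⟩
  induction j with
  | zero =>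
    rw [pow_zero, mul_one]
    calc _ ≤ ∑ k ∈ s, (freqWeight σ k * ‖boxMult (1 / 4) k‖) ^ 2 := by
          refine Finset.sum_le_sum fun k _ => ?_
          have h1 := norm_torusCoeff_annulusFn_le_one a b k
          have h2 := hw0 k
          calc _ ≤ 1 * ‖boxMult (1 / 4) k‖ ^ 2 * freqWeight σ k ^ 2 := by
                gcongr
                nlinarith
            _ = _ := by ring
      _ ≤ U * (1 / 4) ^ (-q) := HU _ (by norm_num) (by norm_num) s
      _ ≤ K := le_max_right _ _
      _ ≤ _ := le_mul_of_one_le_right hKpos.le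
        (Real.one_le_rpow_of_pos_of_le_one_of_nonpos (by norm_num) (by norm_num) (by linarith))
  | succ j ih =>
    set h : ℝ := (1 / 4) * (1 / 2) ^ (j + 1) with hh
    have h2 : (1 / 4 : ℝ) * (1 / 2) ^ j = 2 * h := by rw [hh, pow_succ]; ring
    have hpos : 0 < h := by positivity
    have hlt : 2 * h < 1 / 2 := by
      rw [← h2]
      have : (1 / 2 : ℝ) ^ j ≤ 1 := pow_le_one₀ (by norm_num) (by norm_num)
      linarith
    rw [h2] at ih
    set F : (Fin d → ℤ) → ℝ := fun k => ‖torusCoeff (fun x => (annulusFn a b x : ℂ)) k‖ *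
      ‖boxMult h k - boxMult (2 * h) k‖
    set G : (Fin d → ℤ) → ℝ := fun k => freqWeight σ k * ‖boxMult h k‖ +
      freqWeight σ k * ‖boxMult (2 * h) k‖
    have hG : ∑ k ∈ s, G k ^ 2 ≤ 4 * U * h ^ (-q) := by
      calc ∑ k ∈ s, G k ^ 2 ≤ ∑ k ∈ s, (2 * (freqWeight σ k * ‖boxMult h k‖) ^ 2 +
            2 * (freqWeight σ k * ‖boxMult (2 * h) k‖) ^ 2) := by
            refine Finset.sum_le_sum fun k _ => ?_
            simp only [G]
            nlinarith [sq_nonneg (freqWeight σ k * ‖boxMult h k‖ -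
              freqWeight σ k * ‖boxMult (2 * h) k‖)]
        _ ≤ 2 * (U * h ^ (-q)) + 2 * (U * (2 * h) ^ (-q)) := by
            rw [Finset.sum_add_distrib, ← Finset.mul_sum, ← Finset.mul_sum]
            gcongr
            · exact HU h hpos (by linarith) s
            · exact HU (2 * h) (by linarith) hlt s
        _ ≤ 2 * (U * h ^ (-q)) + 2 * (U * h ^ (-q)) := by
            gcongr _ + 2 * (U * ?_)
            exact Real.rpow_le_rpow_of_nonpos hpos (by linarith) (by linarith)
        _ = _ := by ring
    have hcs : ∑ k ∈ s, F k * G k ≤ E * h ^ (-p) := by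
      calc ∑ k ∈ s, F k * G k ≤ Real.sqrt (∑ k ∈ s, F k ^ 2) * Real.sqrt (∑ k ∈ s, G k ^ 2) :=
            Real.sum_mul_le_sqrt_mul_sqrt s F G
        _ ≤ Real.sqrt (C * h) * Real.sqrt (4 * U * h ^ (-q)) := by
            gcongr
            exact HC a b h hpos hlt s
        _ = Real.sqrt (C * (4 * U) * (h ^ (-p)) ^ 2) := by
            rw [← Real.sqrt_mul (by positivity)]
            congr 1
            have : (h ^ (-p)) ^ 2 = h * h ^ (-q) := by
              rw [← Real.rpow_natCast, ← Real.rpow_mul hpos.le]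
              nth_rw 2 [← Real.rpow_one h]
              rw [← Real.rpow_add hpos]
              congr 1
              simp only [p]
              push_cast
              ring
            rw [this]
            ring
        _ = _ := by rw [Real.sqrt_mul (by positivity), Real.sqrt_sq (by positivity)]
    calc _ ≤ ∑ k ∈ s, (‖torusCoeff (fun x => (annulusFn a b x : ℂ)) k‖ *
          ‖boxMult (2 * h) k‖ ^ 2 * freqWeight σ k + F k * G k) := by
          refine Finset.sum_le_sum fun k _ => ?_
          have h3 : ‖boxMult h k‖ ^ 2 ≤ ‖boxMult (2 * h) k‖ ^ 2 +
              ‖boxMult h k - boxMult (2 * h) k‖ * (‖boxMult h k‖ + ‖boxMult (2 * h) k‖) := by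
            have := norm_sub_norm_le (boxMult h k) (boxMult (2 * h) k)
            nlinarith [norm_nonneg (boxMult h k), norm_nonneg (boxMult (2 * h) k)]
          have h4 := hw0 k
          calc _ ≤ ‖torusCoeff (fun x => (annulusFn a b x : ℂ)) k‖ * (‖boxMult (2 * h) k‖ ^ 2 +
              ‖boxMult h k - boxMult (2 * h) k‖ * (‖boxMult h k‖ + ‖boxMult (2 * h) k‖)) *
                freqWeight σ k := by gcongr
            _ = _ := by simp only [F, G]; ring
      _ ≤ K * (2 * h) ^ (-p) + E * h ^ (-p) := by
          rw [Finset.sum_add_distrib]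
          exact add_le_add ih hcs
      _ = (K * 2 ^ (-p) + E) * h ^ (-p) := by
          rw [Real.mul_rpow zero_le_two hpos.le]; ring
      _ ≤ K * h ^ (-p) := by gcongr

/-- The indicator function of an annulus averaged twice over cubes of half-width `h`. -/
noncomputable def smoothAnnulus {d : ℕ} (h a b : ℝ) : (Fin d → AddCircle (1:ℝ)) → ℝ :=
  torusConv (torusConv (annulusFn a b) (torusBox h)) (torusBox h)

lemma smoothAnnulus_nonneg {d : ℕ} {h : ℝ} (hh : 0 < h) (a b : ℝ) (x : Fin d → AddCircle (1:ℝ)) :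
    0 ≤ smoothAnnulus h a b x :=
  torusConv_nonneg (torusConv_nonneg (annulusFn_nonneg a b) (torusBox_nonneg hh))
    (torusBox_nonneg hh) x

lemma smoothAnnulus_le_one {d : ℕ} {h : ℝ} (hh : 0 < h) (h2 : h < 1 / 2) (a b : ℝ)
    (x : Fin d → AddCircle (1:ℝ)) : smoothAnnulus h a b x ≤ 1 :=
  torusConv_le_one (torusConv_nonneg (annulusFn_nonneg a b) (torusBox_nonneg hh))
    (torusConv_le_one (annulusFn_nonneg a b) (annulusFn_le_one a b) (torusBox_nonneg hh)
      (integral_torusBox hh h2)) (torusBox_nonneg hh) (integral_torusBox hh h2) x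

lemma smoothAnnulus_eq_of_forall {d : ℕ} {h : ℝ} (hh : 0 < h) (h2 : h < 1 / 2) {a b c : ℝ}
    {x : Fin d → AddCircle (1:ℝ)}
    (H : ∀ y : Fin d → AddCircle (1:ℝ), |torusNorm y - torusNorm x| ≤ 2 * (Real.sqrt d * h) →
      annulusFn a b y = c) :
    smoothAnnulus h a b x = c := by
  refine torusConv_eq_of_forall (integral_torusBox hh h2) fun y hy => ?_
  refine torusConv_eq_of_forall (integral_torusBox hh h2) fun z hz => H _ ?_
  have h1 := (abs_torusNorm_sub_le x y).trans (torusNorm_le_of_torusBox_ne_zero hh hy)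
  have h3 := (abs_torusNorm_sub_le (x - y) z).trans (torusNorm_le_of_torusBox_ne_zero hh hz)
  have := abs_sub_le (torusNorm (x - y - z)) (torusNorm (x - y)) (torusNorm x)
  linarith

lemma hasSum_smoothAnnulus {d : ℕ} {h : ℝ} (hh : 0 < h) (h2 : h < 1 / 2) (a b : ℝ)
    (x : Fin d → AddCircle (1:ℝ)) :
    HasSum (fun k => conj (torusCoeff (fun x => (annulusFn a b x : ℂ)) k * boxMult h k ^ 2 *
      mFourier k x)) (smoothAnnulus h a b x : ℂ) := by
  have hb : ∀ x : Fin d → AddCircle (1:ℝ), |torusBox h x| ≤ (2 * h)⁻¹ ^ d :=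
    fun x => by rw [abs_of_nonneg (torusBox_nonneg hh x)]; exact torusBox_le hh x
  have hc : ∀ x : Fin d → AddCircle (1:ℝ), |torusConv (annulusFn a b) (torusBox h) x| ≤ 1 :=
    fun x => by
      rw [abs_of_nonneg (torusConv_nonneg (annulusFn_nonneg a b) (torusBox_nonneg hh) x)]
      exact torusConv_le_one (annulusFn_nonneg a b) (annulusFn_le_one a b) (torusBox_nonneg hh)
        (integral_torusBox hh h2) x
  have := hasSum_torusConv (measurable_torusConv (measurable_annulusFn a b)
    (measurable_torusBox h)) (measurable_torusBox h) hc hb x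
  simp only [torusCoeff_torusConv (measurable_annulusFn a b) (measurable_torusBox h)
    (abs_annulusFn_le_one a b) hb] at this
  simpa only [smoothAnnulus, sq, ← mul_assoc] using! this

/-- The exponential sum of the first `N` points of a sequence. -/
noncomputable def expSum {d : ℕ} (v : ℕ → Fin d → AddCircle (1:ℝ)) (N : ℕ) (k : Fin d → ℤ) : ℂ :=
  ∑ n ∈ range N, mFourier k (v n)

lemma sum_mFourier_sub {d : ℕ} (v : ℕ → Fin d → AddCircle (1:ℝ)) (N : ℕ) (k : Fin d → ℤ) :
    ∑ p ∈ range N ×ˢ range N, mFourier k (v p.1 - v p.2) = ((‖expSum v N k‖ ^ 2 : ℝ) : ℂ) := by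
  rw [Complex.ofReal_pow, ← Complex.mul_conj', expSum, map_sum, Finset.sum_mul_sum,
    Finset.sum_product]
  simp only [mFourier_apply_sub]

lemma abs_sum_smoothAnnulus_sub_le {d : ℕ} (v : ℕ → Fin d → AddCircle (1:ℝ)) (N : ℕ) {h : ℝ}
    (hh : 0 < h) (h2 : h < 1 / 2) (a b : ℝ) {B : ℝ}
    (HB : ∀ s : Finset (Fin d → ℤ), 0 ∉ s →
      ∑ k ∈ s, ‖torusCoeff (fun x => (annulusFn a b x : ℂ)) k‖ * ‖boxMult h k‖ ^ 2 *
        ‖expSum v N k‖ ^ 2 ≤ B) :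
    |∑ p ∈ range N ×ˢ range N, smoothAnnulus h a b (v p.1 - v p.2) - (N : ℝ) ^ 2 *
      (volume {x : Fin d → AddCircle (1:ℝ) | a ≤ torusNorm x ∧ torusNorm x ≤ b}).toReal| ≤ B := by
  classical
  set M := (volume {x : Fin d → AddCircle (1:ℝ) | a ≤ torusNorm x ∧ torusNorm x ≤ b}).toReal
  set F : (Fin d → ℤ) → ℂ := fun k => conj (torusCoeff (fun x => (annulusFn a b x : ℂ)) k *
    boxMult h k ^ 2 * ((‖expSum v N k‖ ^ 2 : ℝ) : ℂ)) with hF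
  have h1 : HasSum F ((∑ p ∈ range N ×ˢ range N, smoothAnnulus h a b (v p.1 - v p.2) : ℝ) : ℂ) := by
    have := hasSum_sum (s := range N ×ˢ range N)
      fun p _ => hasSum_smoothAnnulus hh h2 a b (v p.1 - v p.2)
    simp only [← map_sum, ← Finset.mul_sum, sum_mFourier_sub] at this
    rwa [Complex.ofReal_sum]
  have h0 : F 0 = (((N : ℝ) ^ 2 * M : ℝ) : ℂ) := by
    have e0 : expSum v N 0 = N := by simp [expSum, mFourier_zero]
    have c0 : torusCoeff (fun x => (annulusFn a b x : ℂ)) (0 : Fin d → ℤ) = (M : ℂ) := by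
      simp only [torusCoeff, neg_zero, mFourier_zero, ContinuousMap.one_apply, one_mul,
        integral_complex_ofReal, integral_annulusFn]
      rfl
    simp only [hF, e0, c0, boxMult_zero hh h2]
    simp [mul_comm]
  have h3 := h1.sub (hasSum_ite_eq (0 : Fin d → ℤ) (F 0))
  rw [h0, ← Complex.ofReal_sub] at h3
  rw [← Real.norm_eq_abs, ← Complex.norm_real]
  refine le_of_tendsto h3.norm (Filter.Eventually.of_forall fun s => ?_)
  calc _ = ‖∑ k ∈ s.erase 0, F k‖ := by
        congr 1
        rw [← Finset.sum_subset (Finset.erase_subset 0 s)]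
        · refine Finset.sum_congr rfl fun k hk => ?_
          rw [if_neg (Finset.ne_of_mem_erase hk), sub_zero]
        · intro k hk hk'
          have : k = 0 := by
            by_contra hne
            exact hk' (Finset.mem_erase.mpr ⟨hne, hk⟩)
          rw [this, if_pos rfl, h0, sub_self]
    _ ≤ ∑ k ∈ s.erase 0, ‖F k‖ := norm_sum_le _ _
    _ ≤ B := by
        refine le_trans (le_of_eq ?_) (HB (s.erase 0) (Finset.notMem_erase _ _))
        refine Finset.sum_congr rfl fun k _ => ?_
        simp [hF]

lemma norm_expSum_sq_le {d : ℕ} {γ : ℝ} {v : ℕ → Fin d → AddCircle (1:ℝ)}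
    (hUD : IsGammaUDTorus γ v) {σ : ℝ} (hσ : 0 < σ) : ∃ C : ℝ, 0 < C ∧
      ∀ k : Fin d → ℤ, k ≠ 0 → ∀ N : ℕ, 1 ≤ N →
        ‖expSum v N k‖ ^ 2 ≤ C * freqWeight σ k * (N : ℝ) ^ (2 - 2 * γ) := by
  obtain ⟨C, hC, H⟩ := hUD (σ / 2) (by positivity)
  refine ⟨C ^ 2, by positivity, fun k hk N hN => ?_⟩
  have h1 := H k hk N hN
  have hNpos : (0:ℝ) < N := by exact_mod_cast hN
  have hI : 0 ≤ intNorm k := Real.sqrt_nonneg _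
  have h2 : ‖expSum v N k‖ ≤ N * (C * intNorm k ^ (σ / 2) * (N : ℝ) ^ (-γ)) := by
    rw [norm_mul, norm_inv, Complex.norm_natCast, inv_mul_le_iff₀ hNpos] at h1
    exact h1
  calc ‖expSum v N k‖ ^ 2 ≤ (N * (C * intNorm k ^ (σ / 2) * (N : ℝ) ^ (-γ))) ^ 2 := by gcongr
    _ = C ^ 2 * (intNorm k ^ (σ / 2)) ^ 2 * ((N : ℝ) ^ 2 * ((N : ℝ) ^ (-γ)) ^ 2) := by ring
    _ = C ^ 2 * intNorm k ^ σ * (N : ℝ) ^ (2 - 2 * γ) := by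
        congr 2
        · rw [← Real.rpow_natCast, ← Real.rpow_mul hI]
          congr 1; push_cast; ring
        · rw [← Real.rpow_natCast, ← Real.rpow_natCast, ← Real.rpow_mul hNpos.le,
            ← Real.rpow_add hNpos]
          congr 1; push_cast; ring
    _ ≤ _ := by
        gcongr
        exact intNorm_rpow_le_freqWeight hσ.le k

lemma volume_annulus_thicken_le (d : ℕ) (hd : 1 ≤ d) : ∃ C : ℝ, 0 < C ∧
    ∀ a b c : ℝ, 0 ≤ c →
      (volume {x : Fin d → AddCircle (1:ℝ) | a - c ≤ torusNorm x ∧ torusNorm x ≤ b + c}).toReal ≤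
        (volume {x : Fin d → AddCircle (1:ℝ) | a ≤ torusNorm x ∧ torusNorm x ≤ b}).toReal +
          C * c := by
  obtain ⟨C, hC, H⟩ := volume_torus_shell_le d hd
  refine ⟨2 * C, by positivity, fun a b c hc => ?_⟩
  have h1 := H (a - c) c hc
  have h2 := H b c hc
  simp only [← measureReal_def] at h1 h2 ⊢
  have hsub : {x : Fin d → AddCircle (1:ℝ) | a - c ≤ torusNorm x ∧ torusNorm x ≤ b + c} ⊆
      {x | a ≤ torusNorm x ∧ torusNorm x ≤ b} ∪
        ({x | a - c ≤ torusNorm x ∧ torusNorm x ≤ a - c + c} ∪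
          {x | b ≤ torusNorm x ∧ torusNorm x ≤ b + c}) := by
    rintro x ⟨hx1, hx2⟩
    rcases lt_or_ge (torusNorm x) a with h | h
    · exact Or.inr (Or.inl ⟨hx1, by linarith⟩)
    · rcases le_or_gt (torusNorm x) b with h' | h'
      · exact Or.inl ⟨h, h'⟩
      · exact Or.inr (Or.inr ⟨h'.le, hx2⟩)
  have h3 := measureReal_mono (μ := volume) hsub
  have h4 := measureReal_union_le (μ := volume)
    {x : Fin d → AddCircle (1:ℝ) | a ≤ torusNorm x ∧ torusNorm x ≤ b}
    ({x | a - c ≤ torusNorm x ∧ torusNorm x ≤ a - c + c} ∪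
      {x | b ≤ torusNorm x ∧ torusNorm x ≤ b + c})
  have h5 := measureReal_union_le (μ := volume)
    {x : Fin d → AddCircle (1:ℝ) | a - c ≤ torusNorm x ∧ torusNorm x ≤ a - c + c}
    {x | b ≤ torusNorm x ∧ torusNorm x ≤ b + c}
  linarith

lemma annulusFn_le_smoothAnnulus {d : ℕ} {h : ℝ} (hh : 0 < h) (h2 : h < 1 / 2) (a b : ℝ)
    (x : Fin d → AddCircle (1:ℝ)) : annulusFn a b x ≤
      smoothAnnulus h (a - 2 * (Real.sqrt d * h)) (b + 2 * (Real.sqrt d * h)) x := by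
  classical
  rw [annulusFn_apply]
  split_ifs with hx
  · refine (smoothAnnulus_eq_of_forall hh h2 fun y hy => ?_).ge
    rw [abs_le] at hy
    rw [annulusFn_apply, if_pos ⟨by linarith, by linarith⟩]
  · exact smoothAnnulus_nonneg hh _ _ x

lemma smoothAnnulus_le_annulusFn {d : ℕ} {h : ℝ} (hh : 0 < h) (h2 : h < 1 / 2) (a b : ℝ)
    (x : Fin d → AddCircle (1:ℝ)) :
    smoothAnnulus h (a + 2 * (Real.sqrt d * h)) (b - 2 * (Real.sqrt d * h)) x ≤
      annulusFn a b x := by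
  classical
  rw [annulusFn_apply]
  split_ifs with hx
  · exact smoothAnnulus_le_one hh h2 _ _ x
  · refine (smoothAnnulus_eq_of_forall hh h2 fun y hy => ?_).le
    rw [abs_le] at hy
    rw [annulusFn_apply, if_neg]
    exact fun hy' => hx ⟨by linarith, by linarith⟩

/-- The number of pairs with difference in an annulus, compared with its expected value, in terms
of the corresponding bound for smoothed annuli. -/
lemma abs_sum_annulusFn_sub_le (d : ℕ) (hd : 1 ≤ d) : ∃ D : ℝ, 0 < D ∧
    ∀ (v : ℕ → Fin d → AddCircle (1:ℝ)) (N : ℕ) (h B : ℝ), 0 < h → h < 1 / 2 →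
      (∀ a b : ℝ, |∑ p ∈ range N ×ˢ range N, smoothAnnulus h a b (v p.1 - v p.2) - (N : ℝ) ^ 2 *
        (volume {x : Fin d → AddCircle (1:ℝ) | a ≤ torusNorm x ∧ torusNorm x ≤ b}).toReal| ≤ B) →
      ∀ a b : ℝ, |∑ p ∈ range N ×ˢ range N, annulusFn a b (v p.1 - v p.2) - (N : ℝ) ^ 2 *
        (volume {x : Fin d → AddCircle (1:ℝ) | a ≤ torusNorm x ∧ torusNorm x ≤ b}).toReal| ≤
          B + D * ((N : ℝ) ^ 2 * h) := by
  obtain ⟨C, hC, H⟩ := volume_annulus_thicken_le d hd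
  have hd' : (0:ℝ) < d := by exact_mod_cast hd
  refine ⟨C * (2 * Real.sqrt d), by positivity, fun v N h B hh h2 HB a b => ?_⟩
  set c : ℝ := 2 * (Real.sqrt d * h) with hc
  have hc0 : 0 ≤ c := by positivity
  have hN : (0:ℝ) ≤ (N : ℝ) ^ 2 := by positivity
  have hup := Finset.sum_le_sum (s := range N ×ˢ range N)
    fun p _ => annulusFn_le_smoothAnnulus hh h2 a b (v p.1 - v p.2)
  have hlo := Finset.sum_le_sum (s := range N ×ˢ range N)
    fun p _ => smoothAnnulus_le_annulusFn hh h2 a b (v p.1 - v p.2)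
  have b1 := abs_le.mp (HB (a - c) (b + c))
  have b2 := abs_le.mp (HB (a + c) (b - c))
  have v1 := mul_le_mul_of_nonneg_left (H a b c hc0) hN
  have v2 := mul_le_mul_of_nonneg_left (H (a + c) (b - c) c hc0) hN
  rw [add_sub_cancel_right, sub_add_cancel] at v2
  have hD : C * (2 * Real.sqrt d) * ((N : ℝ) ^ 2 * h) = (N : ℝ) ^ 2 * (C * c) := by
    rw [hc]; ring
  rw [mul_add] at v1 v2
  rw [hD, abs_le]
  constructor <;> linarith [b1.1, b1.2, b2.1, b2.2]

lemma exists_dyadic_near {x : ℝ} (hx : 0 < x) (hx1 : x ≤ 1) :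
    ∃ j : ℕ, x / 4 ≤ (1 / 4) * (1 / 2) ^ j ∧ (1 / 4 : ℝ) * (1 / 2) ^ j ≤ x := by
  obtain ⟨j, h1, h2⟩ := exists_nat_pow_near_of_lt_one hx hx1 (y := (1 / 2 : ℝ)) (by norm_num)
    (by norm_num)
  rw [pow_succ] at h1
  exact ⟨j, by linarith, by linarith⟩

/-- Pair counts in annuli for a uniformly distributed sequence, written as a sum of indicator
functions. -/
lemma sum_annulusFn_asymptotic {d : ℕ} (hd : 2 ≤ d) {γ : ℝ} (hγ : γ ∈ Set.Ioc (0:ℝ) (1 / 2))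
    {v : ℕ → Fin d → AddCircle (1:ℝ)} (hUD : IsGammaUDTorus γ v) {ε : ℝ} (hε : 0 < ε) :
    ∃ C : ℝ, 0 < C ∧ ∀ a b : ℝ, ∀ N : ℕ, 1 ≤ N →
      |∑ p ∈ range N ×ˢ range N, annulusFn a b (v p.1 - v p.2) - (N : ℝ) ^ 2 *
        (volume {x : Fin d → AddCircle (1:ℝ) | a ≤ torusNorm x ∧ torusNorm x ≤ b}).toReal| ≤
          C * (N : ℝ) ^ (2 - 4 * γ / (d + 1) + ε) := by
  obtain ⟨hγ0, hγ1⟩ := hγ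
  set σ : ℝ := min (1 / 4) (ε / 3) with hσdef
  have hσ : 0 < σ := lt_min (by norm_num) (by positivity)
  have hσ1 : σ ≤ 1 / 4 := min_le_left _ _
  have hσ2 : σ ≤ ε / 3 := min_le_right _ _
  obtain ⟨K, hK, HK⟩ := sum_annulus_boxMult_le d hd hσ hσ1
  obtain ⟨L, hL, HL⟩ := norm_expSum_sq_le hUD hσ
  obtain ⟨D, hD, HD⟩ := abs_sum_annulusFn_sub_le d (by omega)
  have hd' : (2:ℝ) ≤ d := by exact_mod_cast hd
  set α : ℝ := 4 * γ / (d + 1) with hα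
  have hα0 : 0 < α := by positivity
  have hαd : α * (d + 1) = 4 * γ := by rw [hα]; field_simp
  set p : ℝ := (d * (1 + 3 * σ) - 1) / 2 with hp
  have hp0 : 0 ≤ p := by
    have : 0 ≤ d * (3 * σ) := by positivity
    linarith
  have hexp : 2 - 2 * γ + α * p ≤ 2 - α + ε := by
    have e : 2 - 2 * γ + α * p = 2 - α + 3 / 2 * (α * d) * σ := by
      rw [hp]; linear_combination (1 / 2) * hαd
    have : α * d ≤ 2 := by linarith
    have : α * d * σ ≤ 2 * (ε / 3) := by gcongr
    linarith
  refine ⟨L * (K * 4 ^ p) + D, by positivity, fun a b N hN => ?_⟩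
  have hN1 : (1:ℝ) ≤ N := by exact_mod_cast hN
  have hN0 : (0:ℝ) < N := by linarith
  set x : ℝ := (N : ℝ) ^ (-α) with hx
  have hx0 : 0 < x := by positivity
  obtain ⟨j, hj1, hj2⟩ := exists_dyadic_near hx0
    (Real.rpow_le_one_of_one_le_of_nonpos hN1 (by linarith))
  set h : ℝ := (1 / 4) * (1 / 2) ^ j with hh
  have hh0 : 0 < h := by positivity
  have hh2 : h < 1 / 2 := by
    have : (1 / 2 : ℝ) ^ j ≤ 1 := pow_le_one₀ (by norm_num) (by norm_num)
    linarith
  set B : ℝ := L * (N : ℝ) ^ (2 - 2 * γ) * (K * h ^ (-p)) with hB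
  have HB : ∀ a b : ℝ, |∑ p ∈ range N ×ˢ range N, smoothAnnulus h a b (v p.1 - v p.2) -
      (N : ℝ) ^ 2 * (volume {x : Fin d → AddCircle (1:ℝ) |
        a ≤ torusNorm x ∧ torusNorm x ≤ b}).toReal| ≤ B := by
    intro a b
    refine abs_sum_smoothAnnulus_sub_le v N hh0 hh2 a b fun s hs => ?_
    calc _ ≤ ∑ k ∈ s, L * (N : ℝ) ^ (2 - 2 * γ) *
          (‖torusCoeff (fun x => (annulusFn a b x : ℂ)) k‖ * ‖boxMult h k‖ ^ 2 *
            freqWeight σ k) := by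
          refine Finset.sum_le_sum fun k hk => ?_
          have := HL k (fun h0 => hs (h0 ▸ hk)) N hN
          calc _ ≤ ‖torusCoeff (fun x => (annulusFn a b x : ℂ)) k‖ * ‖boxMult h k‖ ^ 2 *
                (L * freqWeight σ k * (N : ℝ) ^ (2 - 2 * γ)) := by gcongr
            _ = _ := by ring
      _ ≤ B := by
          rw [← Finset.mul_sum, hB]
          gcongr
          exact HK a b j s
  have hhp : h ^ (-p) ≤ 4 ^ p * (N : ℝ) ^ (α * p) := by
    calc h ^ (-p) ≤ (x / 4) ^ (-p) :=
          Real.rpow_le_rpow_of_nonpos (by positivity) hj1 (by linarith)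
      _ = _ := by
          rw [Real.div_rpow hx0.le (by norm_num), hx, ← Real.rpow_mul hN0.le,
            Real.rpow_neg (by norm_num : (0:ℝ) ≤ 4), div_inv_eq_mul, mul_comm]
          congr 2
          ring
  have hB' : B ≤ L * (K * 4 ^ p) * (N : ℝ) ^ (2 - α + ε) := by
    calc B ≤ L * (N : ℝ) ^ (2 - 2 * γ) * (K * (4 ^ p * (N : ℝ) ^ (α * p))) := by
          rw [hB]; gcongr
      _ = L * (K * 4 ^ p) * (N : ℝ) ^ (2 - 2 * γ + α * p) := by
          rw [Real.rpow_add hN0]; ring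
      _ ≤ _ := by gcongr
  have hNh : (N : ℝ) ^ 2 * h ≤ (N : ℝ) ^ (2 - α + ε) := by
    calc (N : ℝ) ^ 2 * h ≤ (N : ℝ) ^ 2 * x := by gcongr
      _ = (N : ℝ) ^ (2 - α) := by
          rw [hx, sub_eq_add_neg, Real.rpow_add hN0, Real.rpow_two]
      _ ≤ _ := Real.rpow_le_rpow_of_exponent_le hN1 (by linarith)
  calc _ ≤ B + D * ((N : ℝ) ^ 2 * h) := HD v N h B hh0 hh2 HB a b
    _ ≤ L * (K * 4 ^ p) * (N : ℝ) ^ (2 - α + ε) + D * (N : ℝ) ^ (2 - α + ε) := by gcongr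
    _ = _ := by ring

end

open scoped Classical in
/-- Annulus incidence theorem: for a `γ`-uniformly distributed sequence on `𝕋^d`,
`#{(n,m) : a ≤ ‖v_n - v_m‖ ≤ b} = N² |A_{[a,b]}| + O_ε(N^{2 - 4γ/(d+1) + ε})`. -/
theorem stmt9 (d : ℕ) (hd : 2 ≤ d) (γ : ℝ) (hγ : γ ∈ Set.Ioc (0:ℝ) (1/2))
    (v : ℕ → Fin d → AddCircle (1:ℝ)) (hUD : IsGammaUDTorus γ v) :
    ∀ ε : ℝ, 0 < ε → ∃ C : ℝ, 0 < C ∧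
      ∀ a b : ℝ, 1/100 ≤ a → a ≤ b → b < 1/2 → ∀ N : ℕ, 1 ≤ N →
        |((((Finset.range N) ×ˢ (Finset.range N)).filter
              (fun p => a ≤ torusNorm (v p.1 - v p.2) ∧ torusNorm (v p.1 - v p.2) ≤ b)).card : ℝ)
            - (N : ℝ) ^ 2 *
              (volume {x : Fin d → AddCircle (1:ℝ) | a ≤ torusNorm x ∧ torusNorm x ≤ b}).toReal|
          ≤ C * (N : ℝ) ^ (2 - 4*γ/(d+1) + ε) := by
  intro ε hε
  obtain ⟨C, hC, H⟩ := sum_annulusFn_asymptotic hd hγ hUD hε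
  refine ⟨C, hC, fun a b _ _ _ N hN => ?_⟩
  rw [← Finset.sum_boole]
  simpa only [annulusFn_apply] using H a b N hN
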